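/- arXiv:2404.09084 — 3 statements merged into one kernel-verified Lean document; each statement's English description precedes it below -/
import Mathlib

section
/- Let n ≥ 1 and let W = (W₁,…,Wₙ) be the weighted left multi-shift on F²(Hₙ) associated with a weight sequence μ = {μ_β}_{|β|≥1} of strictly positive reals with sup_{α∈𝔽ₙ⁺} μ_{g_iα} < ∞ for each i. Suppose there exists i ∈ {1,…,n} such that μ_{g_iα} − μ_α → 0 as α → ∞ (i.e., for every ε > 0 the set {α ∈ 𝔽ₙ⁺, |α| ≥ 1 : |μ_{g_iα} − μ_α| ≥ ε} is finite). Then every compact operator on F²(Hₙ) belongs to the C*-algebra generated by W₁,…,Wₙ and the identity (the smallest norm-closed, adjoint-closed subalgebra of bounded operators containing W₁,…,Wₙ and I). -/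
open Filter ContinuousLinearMap
open scoped ComplexConjugate

noncomputable section

attribute [local instance] Classical.decEq

abbrev Word (n : ℕ) := FreeMonoid (Fin n)

abbrev Fock (n : ℕ) := lp (fun _ : Word n => ℂ) 2

def fockE {n : ℕ} (α : Word n) : Fock n := lp.single 2 α 1

def wordOp {n : ℕ} {H : Type*} [NormedAddCommGroup H] [InnerProductSpace ℂ H]
    (T : Fin n → H →L[ℂ] H) (α : Word n) : H →L[ℂ] H :=
  ((FreeMonoid.toList α).map T).prod

def wordOfFn {n k : ℕ} (f : Fin k → Fin n) : Word n := FreeMonoid.ofList (List.ofFn f)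

def rowSum {n : ℕ} {H : Type*} [NormedAddCommGroup H] [InnerProductSpace ℂ H]
    [CompleteSpace H] (T : Fin n → H →L[ℂ] H) (k : ℕ) : H →L[ℂ] H :=
  ∑ f : Fin k → Fin n, wordOp T (wordOfFn f) * adjoint (wordOp T (wordOfFn f))

def jsr {n : ℕ} {H : Type*} [NormedAddCommGroup H] [InnerProductSpace ℂ H]
    [CompleteSpace H] (T : Fin n → H →L[ℂ] H) : ℝ :=
  limUnder atTop fun k : ℕ => ‖rowSum T k‖ ^ ((1 : ℝ) / (2 * k))

def muProd {n : ℕ} (μ : Word n → ℝ) (β α : Word n) : ℝ :=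
  ((List.range (FreeMonoid.length β)).map
    fun j => μ (FreeMonoid.ofList ((FreeMonoid.toList β).drop j) * α)).prod

def IsWeightedShift {n : ℕ} (μ : Word n → ℝ) (W : Fin n → Fock n →L[ℂ] Fock n) : Prop :=
  ∀ (i : Fin n) (α : Word n),
    W i (fockE α) = (μ (FreeMonoid.of i * α) : ℂ) • fockE (FreeMonoid.of i * α)

def BddWeights {n : ℕ} (μ : Word n → ℝ) : Prop :=
  ∀ i : Fin n, BddAbove (Set.range fun α : Word n => μ (FreeMonoid.of i * α))

def IsWeightedShiftTensor {n : ℕ} {H : Type*} [NormedAddCommGroup H] [InnerProductSpace ℂ H]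
    (μ : Word n → ℝ)
    (Wt : Fin n → lp (fun _ : Word n => H) 2 →L[ℂ] lp (fun _ : Word n => H) 2) : Prop :=
  ∀ (i : Fin n) (α : Word n) (h : H),
    Wt i (lp.single 2 α h) = (μ (FreeMonoid.of i * α) : ℂ) • lp.single 2 (FreeMonoid.of i * α) h

def polyOp {n : ℕ} {H : Type*} [NormedAddCommGroup H] [InnerProductSpace ℂ H]
    (T : Fin n → H →L[ℂ] H) (c : Word n →₀ ℂ) : H →L[ℂ] H :=
  c.sum fun α z => z • wordOp T α

lemma fockE_apply {n : ℕ} (α β : Word n) : (fockE α : Fock n) β = if β = α then 1 else 0 := by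
  classical
  rw [fockE, lp.single_apply, Pi.single_apply]

lemma inner_fockE_left {n : ℕ} (α : Word n) (x : Fock n) : inner ℂ (fockE α) x = x α := by
  rw [fockE, lp.inner_single_left]
  simp

lemma hasSum_smul_fockE {n : ℕ} (x : Fock n) : HasSum (fun α => x α • fockE α) x := by
  convert lp.hasSum_single (p := 2) (by simp) x using 2 with α
  rw [fockE, ← lp.single_smul, smul_eq_mul, mul_one]

lemma norm_fockE {n : ℕ} (α : Word n) : ‖(fockE α : Fock n)‖ = 1 := by
  rw [fockE, lp.norm_single (by norm_num)]
  simp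

/-- An operator on the Fock space that is diagonal in the standard basis. -/
def IsDiagonal {n : ℕ} (T : Fock n →L[ℂ] Fock n) (t : Word n → ℂ) : Prop :=
  ∀ α, T (fockE α) = t α • fockE α

namespace IsDiagonal

variable {n : ℕ} {S T : Fock n →L[ℂ] Fock n} {s t : Word n → ℂ}

lemma one : IsDiagonal (1 : Fock n →L[ℂ] Fock n) 1 := fun α => by simp

lemma sub (hS : IsDiagonal S s) (hT : IsDiagonal T t) : IsDiagonal (S - T) (s - t) := fun α => by
  simp [hS α, hT α, sub_smul]

lemma smul (c : ℂ) (hT : IsDiagonal T t) : IsDiagonal (c • T) (c • t) := fun α => by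
  simp [hT α, smul_smul]

lemma mul (hS : IsDiagonal S s) (hT : IsDiagonal T t) : IsDiagonal (S * T) (s * t) := fun α => by
  simp [hS α, hT α, smul_smul, mul_comm]

lemma pow (hT : IsDiagonal T t) (k : ℕ) : IsDiagonal (T ^ k) (t ^ k) := by
  induction k with
  | zero => simpa using one
  | succ k ih => simpa only [pow_succ] using ih.mul hT

lemma sum {ι : Type*} (s : Finset ι) {T : ι → Fock n →L[ℂ] Fock n} {t : ι → Word n → ℂ}
    (h : ∀ i ∈ s, IsDiagonal (T i) (t i)) : IsDiagonal (∑ i ∈ s, T i) (∑ i ∈ s, t i) := fun α => by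
  rw [sum_apply, Finset.sum_apply, Finset.sum_smul]
  exact Finset.sum_congr rfl fun i hi => h i hi α

lemma rankOne (α : Word n) :
    IsDiagonal (InnerProductSpace.rankOne ℂ (fockE α) (fockE α))
      (fun β => if β = α then 1 else 0) := fun β => by
  rw [InnerProductSpace.rankOne_apply, inner_fockE_left, fockE_apply]
  by_cases h : β = α
  · simp [h]
  · simp [h, Ne.symm h]

lemma apply_apply (hT : IsDiagonal T t) (x : Fock n) (α : Word n) : T x α = t α * x α := by
  have h := ((hasSum_smul_fockE x).mapL T).mapL (innerSL ℂ (fockE α))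
  have hterm (β : Word n) : innerSL ℂ (fockE α) (T (x β • fockE β)) =
      if β = α then t α * x α else 0 := by
    rw [map_smul, hT β, smul_smul, map_smul, innerSL_apply_apply, inner_fockE_left, fockE_apply]
    by_cases hβ : β = α
    · simp [hβ, mul_comm]
    · simp [hβ, Ne.symm hβ]
  simp only [hterm] at h
  rw [innerSL_apply_apply, inner_fockE_left] at h
  exact h.unique (hasSum_ite_eq α _)

lemma norm_le (hT : IsDiagonal T t) {C : ℝ} (hC : 0 ≤ C) (ht : ∀ α, ‖t α‖ ≤ C) : ‖T‖ ≤ C := by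
  refine ContinuousLinearMap.opNorm_le_bound _ hC fun x => ?_
  have : ‖T x‖ ≤ ‖(C : ℂ) • x‖ := by
    refine lp.norm_mono (by norm_num) fun α => ?_
    rw [hT.apply_apply, lp.coeFn_smul, Pi.smul_apply, smul_eq_mul, norm_mul, norm_mul,
      Complex.norm_real, Real.norm_of_nonneg hC]
    exact mul_le_mul_of_nonneg_right (ht α) (norm_nonneg _)
  rwa [norm_smul, Complex.norm_real, Real.norm_of_nonneg hC] at this

lemma norm_apply_le (hT : IsDiagonal T t) (α : Word n) : ‖t α‖ ≤ ‖T‖ := by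
  simpa [hT α, norm_smul, norm_fockE] using T.le_opNorm (fockE α)

end IsDiagonal

lemma IsDiagonal.one_sub_sum_rankOne {n : ℕ} (s : Finset (Word n)) :
    IsDiagonal (1 - ∑ α ∈ s, InnerProductSpace.rankOne ℂ (fockE α) (fockE α))
      (fun β => if β ∈ s then 0 else 1) := by
  convert IsDiagonal.one.sub (IsDiagonal.sum s fun α _ => IsDiagonal.rankOne α) using 1
  ext β
  by_cases h : β ∈ s <;> simp [h, Finset.sum_apply]

/-- A closed subspace containing the matrix units contains all
compact operators. -/
lemma mem_of_isCompactOperator {n : ℕ} (A : Submodule ℂ (Fock n →L[ℂ] Fock n))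
    (hA : IsClosed (A : Set (Fock n →L[ℂ] Fock n)))
    (h : ∀ α β : Word n, InnerProductSpace.rankOne ℂ (fockE α) (fockE β) ∈ A)
    {K : Fock n →L[ℂ] Fock n} (hK : IsCompactOperator K) : K ∈ A := by
  have hrank (α : Word n) (y : Fock n) : InnerProductSpace.rankOne ℂ (fockE α) y ∈ A := by
    refine hA.mem_of_tendsto (((hasSum_smul_fockE y).mapL
      (InnerProductSpace.rankOne ℂ (fockE α)))) (.of_forall fun s => ?_)
    refine sum_mem fun β _ => ?_
    rw [map_smulₛₗ]
    exact A.smul_mem _ (h α β)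
  have hmem (s : Finset (Word n)) :
      (∑ α ∈ s, InnerProductSpace.rankOne ℂ (fockE α) (fockE α)) * K ∈ A := by
    rw [Finset.sum_mul]
    refine sum_mem fun α _ => ?_
    rw [ContinuousLinearMap.mul_def, InnerProductSpace.rankOne_comp]
    exact hrank α _
  refine hA.closure_subset (Metric.mem_closure_iff.2 fun ε hε => ?_)
  obtain ⟨C, hC, hKC⟩ := IsCompactOperator.image_closedBall_subset_compact (f := K.toLinearMap) hK 1
  obtain ⟨N, -, hN, hcover⟩ := hC.finite_cover_balls (e := ε / 4) (by positivity)
  have hev : ∀ᶠ s : Finset (Word n) in atTop, ∀ y ∈ N,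
      dist (∑ α ∈ s, y α • fockE α) y < ε / 4 :=
    (hN.eventually_all).2 fun y _ =>
      Metric.tendsto_nhds.1 (hasSum_smul_fockE y) _ (by positivity)
  obtain ⟨s, hs⟩ := hev.exists
  refine ⟨_, hmem s, ?_⟩
  set P := ∑ α ∈ s, InnerProductSpace.rankOne ℂ (fockE α) (fockE α) with hP
  have hPy (y : Fock n) : P y = ∑ α ∈ s, y α • fockE α := by
    simp [hP, sum_apply, inner_fockE_left]
  have hQ : ‖1 - P‖ ≤ 1 := (IsDiagonal.one_sub_sum_rankOne s).norm_le zero_le_one fun β => by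
    split_ifs <;> simp
  rw [dist_eq_norm]
  refine lt_of_le_of_lt (b := ε / 2) ?_ (by linarith)
  refine ContinuousLinearMap.opNorm_le_of_unit_norm (𝕜 := ℂ) (by positivity) fun x hx => ?_
  have hxC : K x ∈ C := hKC ⟨x, by simp [hx], rfl⟩
  obtain ⟨y, hy, hxy⟩ := Set.mem_iUnion₂.1 (hcover hxC)
  have hy' := hs y hy
  rw [← hPy, dist_comm, dist_eq_norm] at hy'
  rw [Metric.mem_ball, dist_eq_norm] at hxy
  have : (K - P * K) x = (1 - P) (K x - y) + (y - P y) := by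
    simp only [sub_apply, map_sub, one_apply_eq_self,
      mul_apply_eq_comp]
    abel
  rw [this]
  have h1 := (1 - P).le_of_opNorm_le hQ (K x - y)
  linarith [norm_add_le ((1 - P) (K x - y)) (y - P y)]

/-- If `D` is a diagonal operator with entries vanishing at infinity and `C` is a diagonal operator
whose entries vanish at the empty word and are positive elsewhere, then `D * (1 - C / M) ^ k`
converges to the compression of `D` to the vacuum vector. -/
lemma IsDiagonal.tendsto_mul_one_sub_pow {n : ℕ} {D C : Fock n →L[ℂ] Fock n} {d : Word n → ℂ}
    {c : Word n → ℝ} (hD : IsDiagonal D d) (hC : IsDiagonal C fun α => (c α : ℂ))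
    (hd : Tendsto d cofinite (nhds 0)) (hc_one : c 1 = 0) (hc : ∀ α, α ≠ 1 → 0 < c α)
    {M : ℝ} (hM : ‖C‖ < M) :
    Tendsto (fun k : ℕ => D * (1 - (M⁻¹ : ℂ) • C) ^ k) atTop
      (nhds (d 1 • InnerProductSpace.rankOne ℂ (fockE 1) (fockE 1))) := by
  have hM0 : 0 < M := (norm_nonneg C).trans_lt hM
  have hcM (α : Word n) : c α < M := by
    have := hC.norm_apply_le α
    rw [Complex.norm_real] at this
    exact (le_abs_self _).trans_lt (this.trans_lt hM)
  set r : Word n → ℝ := fun α => 1 - M⁻¹ * c α with hr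
  have hr0 (α : Word n) : 0 ≤ r α := by
    have : M⁻¹ * c α ≤ 1 := by
      rw [inv_mul_le_iff₀ hM0, mul_one]
      exact (hcM α).le
    simpa [hr] using this
  have hr1 (α : Word n) (hα : α ≠ 1) : r α < 1 := by
    have := mul_pos (inv_pos.2 hM0) (hc α hα)
    simp only [hr]
    linarith
  have hdiag (k : ℕ) : IsDiagonal
      (D * (1 - (M⁻¹ : ℂ) • C) ^ k - d 1 • InnerProductSpace.rankOne ℂ (fockE 1) (fockE 1))
      (fun α => if α = 1 then 0 else d α * (r α : ℂ) ^ k) := by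
    convert (hD.mul ((IsDiagonal.one.sub (hC.smul (M⁻¹ : ℂ))).pow k)).sub
      ((IsDiagonal.rankOne 1).smul (d 1)) using 1
    ext α
    by_cases hα : α = 1
    · simp [hα, hc_one]
    · simp [hα, hr]
  rw [Metric.tendsto_nhds]
  intro ε hε
  have hfin : {α | ¬ ‖d α‖ < ε / 2}.Finite := by
    have := (Metric.tendsto_nhds.1 hd) (ε / 2) (by positivity)
    simpa [Filter.eventually_cofinite] using this
  have hev : ∀ᶠ k : ℕ in atTop, ∀ α ∈ {α | ¬ ‖d α‖ < ε / 2}, α ≠ 1 →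
      ‖d α * (r α : ℂ) ^ k‖ < ε / 2 := by
    refine hfin.eventually_all.2 fun α _ => eventually_imp_distrib_left.2 fun hα => ?_
    have hlim : Tendsto (fun k : ℕ => ‖d α‖ * r α ^ k) atTop (nhds (‖d α‖ * 0)) :=
      (tendsto_pow_atTop_nhds_zero_of_lt_one (hr0 α) (hr1 α hα)).const_mul _
    rw [mul_zero] at hlim
    filter_upwards [hlim.eventually_lt_const (show 0 < ε / 2 by positivity)] with k hk
    simpa [abs_of_nonneg (hr0 α)] using hk
  filter_upwards [hev] with k hk
  rw [dist_eq_norm]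
  refine ((hdiag k).norm_le (C := ε / 2) (by positivity) fun α => ?_).trans_lt (by linarith)
  by_cases hα : α = 1
  · simpa [hα] using (half_pos hε).le
  rw [if_neg hα]
  by_cases hdα : ‖d α‖ < ε / 2
  · rw [norm_mul, norm_pow, Complex.norm_real, Real.norm_of_nonneg (hr0 α)]
    exact (mul_le_of_le_one_right (norm_nonneg _)
      (pow_le_one₀ (hr0 α) (hr1 α hα).le)).trans hdα.le
  · exact (hk α hdα hα).le

namespace IsWeightedShift

variable {n : ℕ} {μ : Word n → ℝ} {W : Fin n → Fock n →L[ℂ] Fock n}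

lemma adjoint_apply (hW : IsWeightedShift μ W) (i : Fin n) (x : Fock n) (β : Word n) :
    adjoint (W i) x β = μ (FreeMonoid.of i * β) * x (FreeMonoid.of i * β) := by
  rw [← inner_fockE_left, adjoint_inner_right, hW, inner_smul_left, inner_fockE_left,
    Complex.conj_ofReal]

lemma adjoint_fockE_mul (hW : IsWeightedShift μ W) (i j : Fin n) (α : Word n) :
    adjoint (W j) (fockE (FreeMonoid.of i * α)) =
      if j = i then (μ (FreeMonoid.of i * α) : ℂ) • fockE α else 0 := by
  ext β
  rw [hW.adjoint_apply, fockE_apply]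
  have key : FreeMonoid.of j * β = FreeMonoid.of i * α ↔ j = i ∧ β = α :=
    List.cons_eq_cons
  by_cases hj : j = i
  · subst hj
    rw [if_pos rfl, lp.coeFn_smul, Pi.smul_apply, fockE_apply, smul_eq_mul]
    by_cases hβ : β = α
    · simp [hβ]
    · simp [key, hβ]
  · rw [if_neg hj, if_neg (mt key.1 (fun h => hj h.1)), mul_zero]
    rfl

lemma adjoint_fockE_one (hW : IsWeightedShift μ W) (j : Fin n) :
    adjoint (W j) (fockE 1) = 0 := by
  ext β
  have : FreeMonoid.of j * β ≠ 1 := List.cons_ne_nil _ _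
  rw [hW.adjoint_apply, fockE_apply, if_neg this]
  simp

lemma isDiagonal_adjoint_mul_self (hW : IsWeightedShift μ W) (i : Fin n) :
    IsDiagonal (adjoint (W i) * W i) (fun α => (μ (FreeMonoid.of i * α) : ℂ) ^ 2) := fun α => by
  rw [mul_apply_eq_comp, hW, map_smul, hW.adjoint_fockE_mul, if_pos rfl, smul_smul, ← sq]

lemma isDiagonal_sum_mul_adjoint (hW : IsWeightedShift μ W) :
    IsDiagonal (∑ j, W j * adjoint (W j)) (fun α => ((if α = 1 then 0 else μ α ^ 2 : ℝ) : ℂ)) := by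
  intro α
  rw [sum_apply]
  induction α using FreeMonoid.casesOn with
  | one => simp [hW.adjoint_fockE_one]
  | of_mul i α =>
    have : FreeMonoid.of i * α ≠ 1 := List.cons_ne_nil _ _
    simp only [if_neg this]
    rw [Finset.sum_eq_single i]
    · rw [mul_apply_eq_comp, hW.adjoint_fockE_mul, if_pos rfl, map_smul, hW, smul_smul,
        ← sq, Complex.ofReal_pow]
    · intro j _ hj
      rw [mul_apply_eq_comp, hW.adjoint_fockE_mul, if_neg hj, map_zero]
    · simp

lemma rankOne_mem (hW : IsWeightedShift μ W)
    (hμ : ∀ β : Word n, 1 ≤ FreeMonoid.length β → 0 < μ β)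
    (A : StarSubalgebra ℂ (Fock n →L[ℂ] Fock n)) (hA : ∀ i, W i ∈ A)
    (h : InnerProductSpace.rankOne ℂ (fockE (1 : Word n)) (fockE (1 : Word n)) ∈ A)
    (α β : Word n) : InnerProductSpace.rankOne ℂ (fockE α) (fockE β) ∈ A := by
  have hleft (α : Word n) : InnerProductSpace.rankOne ℂ (fockE α) (fockE (1 : Word n)) ∈ A := by
    induction α using FreeMonoid.inductionOn' with
    | one => exact h
    | of_mul i α ih =>
      have hpos : (μ (FreeMonoid.of i * α) : ℂ) ≠ 0 := by
        refine Complex.ofReal_ne_zero.2 (hμ _ ?_).ne'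
        simp [FreeMonoid.length_mul]
      have := A.smul_mem (mul_mem (hA i) ih) (μ (FreeMonoid.of i * α) : ℂ)⁻¹
      rwa [ContinuousLinearMap.mul_def, InnerProductSpace.comp_rankOne, hW, map_smul,
        smul_apply, smul_smul, inv_mul_cancel₀ hpos, one_smul] at this
  have hmul := mul_mem (hleft α) (star_mem (hleft β))
  rw [ContinuousLinearMap.star_eq_adjoint, InnerProductSpace.adjoint_rankOne,
    ContinuousLinearMap.mul_def, InnerProductSpace.rankOne_comp_rankOne, inner_fockE_left,
    fockE_apply, if_pos rfl, one_smul] at hmul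
  exact hmul

end IsWeightedShift

theorem stmt_11 (n : ℕ) (hn : 1 ≤ n) (μ : Word n → ℝ)
    (hμ : ∀ β : Word n, 1 ≤ FreeMonoid.length β → 0 < μ β)
    (hbdd : BddWeights μ)
    (W : Fin n → Fock n →L[ℂ] Fock n) (hW : IsWeightedShift μ W)
    (hconv : ∃ i : Fin n, ∀ ε : ℝ, 0 < ε →
      {α : Word n | 1 ≤ FreeMonoid.length α ∧
        ε ≤ |μ (FreeMonoid.of i * α) - μ α|}.Finite) :
    ∀ K : Fock n →L[ℂ] Fock n, IsCompactOperator ⇑K →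
      K ∈ (StarAlgebra.adjoin ℂ (Set.range W)).topologicalClosure := by
  intro K hK
  obtain ⟨i, hi⟩ := hconv
  set A := (StarAlgebra.adjoin ℂ (Set.range W)).topologicalClosure
  have hWA (j : Fin n) : W j ∈ A :=
    StarSubalgebra.le_topologicalClosure _ (StarAlgebra.subset_adjoin ℂ _ ⟨j, rfl⟩)
  have hclosed : IsClosed (A : Set (Fock n →L[ℂ] Fock n)) :=
    StarSubalgebra.isClosed_topologicalClosure _
  set C := ∑ j, W j * adjoint (W j)
  have hCA : C ∈ A := sum_mem fun j _ => mul_mem (hWA j) (star_mem (hWA j))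
  set c : Word n → ℝ := fun α => if α = 1 then 0 else μ α ^ 2 with hc
  have hc_one : c 1 = 0 := if_pos rfl
  have hCdiag : IsDiagonal C fun α => (c α : ℂ) := hW.isDiagonal_sum_mul_adjoint
  have hDdiag := (hW.isDiagonal_adjoint_mul_self i).sub hCdiag
  have hDA : adjoint (W i) * W i - C ∈ A := sub_mem (mul_mem (star_mem (hWA i)) (hWA i)) hCA
  have hpos (α : Word n) (hα : α ≠ 1) : 0 < μ α :=
    hμ α (Nat.one_le_iff_ne_zero.2 (mt FreeMonoid.length_eq_zero.1 hα))
  have hmul_ne (α : Word n) : FreeMonoid.of i * α ≠ 1 := List.cons_ne_nil _ _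
  have hle (α : Word n) (hα : α ≠ 1) : μ α ≤ ‖C‖ + 1 := by
    have h := hCdiag.norm_apply_le α
    simp only [hc, if_neg hα, Complex.norm_real, Real.norm_of_nonneg (sq_nonneg (μ α))] at h
    nlinarith [hpos α hα, norm_nonneg C]
  have hd : Tendsto ((fun α => (μ (FreeMonoid.of i * α) : ℂ) ^ 2) - fun α => (c α : ℂ))
      cofinite (nhds 0) := by
    rw [Metric.tendsto_nhds]
    intro ε hε
    have hS : 0 < 2 * (‖C‖ + 1) := by positivity
    rw [Filter.eventually_cofinite]
    refine ((hi (ε / (2 * (‖C‖ + 1))) (by positivity)).union (Set.finite_singleton 1)).subset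
      fun α hα => ?_
    by_contra hcon
    simp only [Set.mem_union, Set.mem_singleton_iff, Set.mem_ofPred_eq, not_or, not_and,
      not_le] at hcon
    obtain ⟨h1, hα1⟩ := hcon
    have h2 := h1 (Nat.one_le_iff_ne_zero.2 (mt FreeMonoid.length_eq_zero.1 hα1))
    refine hα ?_
    rw [dist_zero_right, Pi.sub_apply, ← Complex.ofReal_pow, ← Complex.ofReal_sub,
      Complex.norm_real, Real.norm_eq_abs]
    simp only [hc, if_neg hα1]
    rw [sq_sub_sq, abs_mul, mul_comm,
      abs_of_pos (add_pos (hpos _ (hmul_ne α)) (hpos _ hα1))]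
    rw [lt_div_iff₀ hS] at h2
    refine lt_of_le_of_lt (mul_le_mul_of_nonneg_left ?_ (abs_nonneg _)) h2
    linarith [hle _ (hmul_ne α), hle _ hα1]
  have hlim := hDdiag.tendsto_mul_one_sub_pow hCdiag hd hc_one
    (fun α hα => by simpa [hc, hα] using pow_pos (hpos α hα) 2) (lt_add_one ‖C‖)
  have hvac := hclosed.mem_of_tendsto hlim (.of_forall fun k =>
    mul_mem hDA (pow_mem (sub_mem (one_mem A) (A.smul_mem hCA _)) k))
  have hne : (μ (FreeMonoid.of i * 1) : ℂ) ^ 2 ≠ 0 :=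
    pow_ne_zero 2 (Complex.ofReal_ne_zero.2 (hpos _ (hmul_ne 1)).ne')
  have hvac' := A.smul_mem hvac ((μ (FreeMonoid.of i * 1) : ℂ) ^ 2)⁻¹
  rw [Pi.sub_apply, hc_one, Complex.ofReal_zero, sub_zero, smul_smul,
    inv_mul_cancel₀ hne, one_smul] at hvac'
  exact mem_of_isCompactOperator (Subalgebra.toSubmodule A.toSubalgebra) hclosed
    (hW.rankOne_mem hμ A hWA hvac') hK

end
end

section
/- Let n ≥ 1, let H be a Hilbert space, and let T = (T₁,…,Tₙ) be a quasi-nilpotent n-tuple of bounded operators on H, i.e. r(T) = 0. Then there exists a weight sequence μ = {μ_β}_{|β|≥1} of nonnegative reals with sup_{α∈𝔽ₙ⁺} μ_{g_iα} < ∞ for each i, whose associated weighted left multi-shift W = (W₁,…,Wₙ) on F²(Hₙ) satisfies r(W) = 0 and each W_i is a compact operator, together with a closed subspace M ⊆ ℓ²(𝔽ₙ⁺; H) invariant under each W_i^*⊗I_H and a bounded invertible operator S : H → M such that T_i^* = S⁻¹((W_i^*⊗I_H)|_M)S for each i ∈ {1,…,n}. -/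
open Filter ContinuousLinearMap
open scoped ComplexConjugate

noncomputable section

attribute [local instance] Classical.decEq

theorem antitone_iSup_add {a : ℕ → ℝ} (ha : BddAbove (Set.range a)) :
    Antitone fun l => ⨆ j, a (l + j) := by
  intro l l' hl
  refine ciSup_le fun j => ?_
  have hb : BddAbove (Set.range fun j => a (l + j)) :=
    ha.mono (Set.range_subset_iff.2 fun j => Set.mem_range_self _)
  convert le_ciSup hb (l' - l + j) using 2
  omega

theorem tendsto_iSup_add_zero {a : ℕ → ℝ} (ha : Tendsto a atTop (nhds 0)) (h0 : ∀ k, 0 ≤ a k) :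
    Tendsto (fun l => ⨆ j, a (l + j)) atTop (nhds 0) := by
  rw [Metric.tendsto_atTop]
  intro ε hε
  obtain ⟨N, hN⟩ := (Metric.tendsto_atTop.1 ha) (ε / 2) (half_pos hε)
  refine ⟨N, fun l hl => ?_⟩
  have h1 : ⨆ j, a (l + j) ≤ ε / 2 := ciSup_le fun j => by
    have := hN (l + j) (by omega)
    rw [Real.dist_0_eq_abs] at this
    exact (le_abs_self _).trans this.le
  rw [Real.dist_0_eq_abs, abs_of_nonneg (Real.iSup_nonneg fun j => h0 _)]
  linarith

theorem exists_antitone_weights (s : ℕ → ℝ) (hs : ∀ k, 0 ≤ s k)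
    (h : Tendsto (fun k : ℕ => s k ^ ((1 : ℝ) / (2 * k))) atTop (nhds 0)) :
    ∃ m : ℕ → ℝ, Antitone m ∧ (∀ k, 0 < m k) ∧ Tendsto m atTop (nhds 0) ∧
      ∀ k, 1 ≤ k → s k ≤ (1 / 4 : ℝ) ^ k * (∏ j ∈ Finset.range k, m (j + 1)) ^ 2 := by
  set a : ℕ → ℝ := fun k => s k ^ ((1 : ℝ) / (2 * k)) with ha
  have h0 : ∀ k, 0 ≤ a k := fun k => Real.rpow_nonneg (hs k) _
  have hbdd : BddAbove (Set.range a) := h.bddAbove_range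
  have hanti : Antitone fun l : ℕ => 2 * ((⨆ j, a (l + j)) + 1 / ((l : ℝ) + 1)) := by
    intro l l' hl
    have h1 := antitone_iSup_add hbdd hl
    have h2 : 1 / ((l' : ℝ) + 1) ≤ 1 / ((l : ℝ) + 1) := by gcongr
    dsimp only at h1 ⊢
    linarith
  have hpos : ∀ l : ℕ, 0 < 2 * ((⨆ j, a (l + j)) + 1 / ((l : ℝ) + 1)) := fun l => by
    have : 0 ≤ ⨆ j, a (l + j) := Real.iSup_nonneg fun j => h0 _
    positivity
  refine ⟨fun l => 2 * ((⨆ j, a (l + j)) + 1 / ((l : ℝ) + 1)), hanti, hpos, ?_, ?_⟩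
  · simpa using ((tendsto_iSup_add_zero h h0).add
      (tendsto_one_div_add_atTop_nhds_zero_nat (𝕜 := ℝ))).const_mul 2
  · intro k hk
    have hsk : s k = (a k ^ k) ^ 2 := by
      rw [← pow_mul, ha, ← Real.rpow_natCast, ← Real.rpow_mul (hs k)]
      have : (1 : ℝ) / (2 * k) * ((k * 2 : ℕ) : ℝ) = 1 := by
        have : (k : ℝ) ≠ 0 := by positivity
        push_cast
        field_simp
      rw [this, Real.rpow_one]
    have hle : a k ≤ ⨆ j, a (k + j) :=
      le_ciSup (f := fun j => a (k + j))
        (hbdd.mono (Set.range_subset_iff.2 fun j => Set.mem_range_self _)) 0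
    have hprod : (2 * a k) ^ k ≤
        ∏ j ∈ Finset.range k, 2 * ((⨆ i, a (j + 1 + i)) + 1 / (((j + 1 : ℕ) : ℝ) + 1)) := by
      rw [← Finset.card_range k, ← Finset.prod_const, Finset.card_range]
      refine Finset.prod_le_prod (fun _ _ => by have := h0 k; positivity) fun j hj => ?_
      refine le_trans ?_ (hanti (Nat.succ_le_of_lt (Finset.mem_range.1 hj)))
      have : (0 : ℝ) < 1 / ((k : ℝ) + 1) := by positivity
      dsimp only
      linarith
    calc s k = (1 / 4 : ℝ) ^ k * ((2 * a k) ^ k) ^ 2 := by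
          rw [hsk, mul_pow, mul_pow, ← mul_assoc, ← pow_mul 2 k 2, mul_comm k 2, pow_mul 2 2 k,
            ← mul_pow]
          norm_num
      _ ≤ _ := by
          have : 0 ≤ (2 * a k) ^ k := by have := h0 k; positivity
          gcongr

theorem tendsto_prod_rpow_inv_zero {u : ℕ → ℝ} (hu : ∀ k, 0 ≤ u k)
    (h : Tendsto u atTop (nhds 0)) :
    Tendsto (fun k : ℕ => (∏ j ∈ Finset.range k, u j) ^ ((k : ℝ)⁻¹)) atTop (nhds 0) := by
  refine squeeze_zero' (Eventually.of_forall fun k =>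
    Real.rpow_nonneg (Finset.prod_nonneg fun j _ => hu j) _) ?_ h.cesaro
  filter_upwards [eventually_ge_atTop 1] with k hk
  have := Real.geom_mean_le_arith_mean (Finset.range k) (fun _ => 1) u (fun _ _ => zero_le_one)
    (by simp; omega) (fun j _ => hu j)
  simpa [div_eq_inv_mul] using this

theorem sum_word_le {n : ℕ} {g : Word n → ℝ} (hg : ∀ α, 0 ≤ g α) {u : ℕ → ℝ} (hu : Summable u)
    (h : ∀ k, ∑ f : Fin k → Fin n, g (wordOfFn f) ≤ u k) (s : Finset (Word n)) :
    ∑ α ∈ s, g α ≤ ∑' k, u k := by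
  have hu0 : ∀ k, 0 ≤ u k := fun k => (Finset.sum_nonneg fun _ _ => hg _).trans (h k)
  let e : Word n ≃ Σ k, Fin k → Fin n := List.equivSigmaTuple
  let t : Finset (Σ k, Fin k → Fin n) := s.map e.toEmbedding
  calc ∑ α ∈ s, g α = ∑ p ∈ t, g (e.symm p) := by simp [t]
    _ ≤ ∑ p ∈ (t.image Sigma.fst).sigma fun k => (Finset.univ : Finset (Fin k → Fin n)),
          g (e.symm p) := by
        refine Finset.sum_le_sum_of_subset_of_nonneg (fun p hp => ?_) fun _ _ _ => hg _
        simpa using ⟨p.2, hp⟩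
    _ = ∑ k ∈ t.image Sigma.fst, ∑ f : Fin k → Fin n, g (wordOfFn f) := Finset.sum_sigma _ _ _
    _ ≤ ∑ k ∈ t.image Sigma.fst, u k := Finset.sum_le_sum fun k _ => h k
    _ ≤ ∑' k, u k := hu.sum_le_tsum _ fun k _ => hu0 k

theorem rowSum_isSymmetric {n : ℕ} {H : Type*} [NormedAddCommGroup H] [InnerProductSpace ℂ H]
    [CompleteSpace H] (T : Fin n → H →L[ℂ] H) (k : ℕ) :
    (rowSum T k : H →ₗ[ℂ] H).IsSymmetric := by
  intro x y
  simp only [rowSum, coe_coe, sum_apply, sum_inner, inner_sum]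
  refine Finset.sum_congr rfl fun f _ => ?_
  exact (adjoint_inner_right (wordOp T (wordOfFn f)) _ _).symm.trans
    (adjoint_inner_left (wordOp T (wordOfFn f)) _ _)

theorem re_inner_rowSum {n : ℕ} {H : Type*} [NormedAddCommGroup H] [InnerProductSpace ℂ H]
    [CompleteSpace H] (T : Fin n → H →L[ℂ] H) (k : ℕ) (x : H) :
    RCLike.re (inner ℂ (rowSum T k x) x) =
      ∑ f : Fin k → Fin n, ‖adjoint (wordOp T (wordOfFn f)) x‖ ^ 2 := by
  simp only [rowSum, sum_apply, sum_inner, map_sum]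
  refine Finset.sum_congr rfl fun f _ => ?_
  rw [← inner_self_eq_norm_sq (𝕜 := ℂ)]
  exact congrArg _ (adjoint_inner_right (wordOp T (wordOfFn f)) _ _).symm

theorem sum_norm_adjoint_wordOp_le {n : ℕ} {H : Type*} [NormedAddCommGroup H]
    [InnerProductSpace ℂ H] [CompleteSpace H] (T : Fin n → H →L[ℂ] H) (k : ℕ) (x : H) :
    ∑ f : Fin k → Fin n, ‖adjoint (wordOp T (wordOfFn f)) x‖ ^ 2 ≤ ‖rowSum T k‖ * ‖x‖ ^ 2 := by
  rw [← re_inner_rowSum]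
  calc _ ≤ ‖inner ℂ (rowSum T k x) x‖ := RCLike.re_le_norm _
    _ ≤ ‖rowSum T k x‖ * ‖x‖ := norm_inner_le_norm _ _
    _ ≤ _ := by
      rw [pow_two, ← mul_assoc]
      gcongr
      exact le_opNorm _ _

theorem norm_rowSum_le {n : ℕ} {H : Type*} [NormedAddCommGroup H] [InnerProductSpace ℂ H]
    [CompleteSpace H] (T : Fin n → H →L[ℂ] H) (k : ℕ) {C : ℝ} (hC : 0 ≤ C)
    (h : ∀ x, ∑ f : Fin k → Fin n, ‖adjoint (wordOp T (wordOfFn f)) x‖ ^ 2 ≤ C * ‖x‖ ^ 2) :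
    ‖rowSum T k‖ ≤ C := by
  rw [norm_eq_iSup_rayleighQuotient _ (rowSum_isSymmetric T k)]
  refine ciSup_le fun x => ?_
  rw [rayleighQuotient, reApplyInnerSelf_apply, re_inner_rowSum, abs_of_nonneg (by positivity)]
  exact div_le_of_le_mul₀ (by positivity) hC (h x)

section WeightedPullback

variable {ι κ E : Type*} [NormedAddCommGroup E]

theorem sum_norm_sq_comp_le {f : ι → κ} (hf : Function.Injective f)
    (x : lp (fun _ : κ => E) 2) (s : Finset ι) :
    ∑ i ∈ s, ‖x (f i)‖ ^ 2 ≤ ‖x‖ ^ 2 := by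
  have := lp.sum_rpow_le_norm_rpow (p := 2) (by simp) x (s.map ⟨f, hf⟩)
  simpa using this

variable [InnerProductSpace ℂ E]

theorem sum_norm_sq_smul_comp_le {f : ι → κ} (hf : Function.Injective f) {w : ι → ℝ} {C : ℝ}
    (hw : ∀ i, |w i| ≤ C) (x : lp (fun _ : κ => E) 2) (s : Finset ι) :
    ∑ i ∈ s, ‖(w i : ℂ) • x (f i)‖ ^ 2 ≤ (C * ‖x‖) ^ 2 := by
  calc ∑ i ∈ s, ‖(w i : ℂ) • x (f i)‖ ^ 2 ≤ ∑ i ∈ s, C ^ 2 * ‖x (f i)‖ ^ 2 := by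
        refine Finset.sum_le_sum fun i _ => ?_
        rw [norm_smul, mul_pow, Complex.norm_real, Real.norm_eq_abs]
        gcongr
        exact hw i
    _ ≤ (C * ‖x‖) ^ 2 := by
        rw [← Finset.mul_sum, mul_pow]
        gcongr
        exact sum_norm_sq_comp_le hf x s

theorem exists_weightedPullback {f : ι → κ} (hf : Function.Injective f) {w : ι → ℝ} {C : ℝ}
    (hC : 0 ≤ C) (hw : ∀ i, |w i| ≤ C) :
    ∃ R : lp (fun _ : κ => E) 2 →L[ℂ] lp (fun _ : ι => E) 2,
      (∀ x i, R x i = (w i : ℂ) • x (f i)) ∧ ‖R‖ ≤ C := by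
  let L : lp (fun _ : κ => E) 2 →ₗ[ℂ] lp (fun _ : ι => E) 2 :=
    { toFun := fun x => ⟨fun i => (w i : ℂ) • x (f i), memℓp_gen' (C := (C * ‖x‖) ^ 2) fun s => by
        simpa using sum_norm_sq_smul_comp_le hf hw x s⟩
      map_add' := fun x y => by ext i; exact smul_add _ _ _
      map_smul' := fun c x => by ext i; exact smul_comm _ _ _ }
  refine ⟨L.mkContinuous C fun x => ?_, fun x i => rfl, L.mkContinuous_norm_le hC _⟩
  refine lp.norm_le_of_forall_sum_le (by simp) (by positivity) fun s => ?_
  simpa [L] using sum_norm_sq_smul_comp_le hf hw x s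

variable [CompleteSpace E]

theorem adjoint_weightedPullback_single {f : ι → κ} {w : ι → ℝ}
    {R : lp (fun _ : κ => E) 2 →L[ℂ] lp (fun _ : ι => E) 2}
    (hR : ∀ x i, R x i = (w i : ℂ) • x (f i)) (i : ι) (h : E) :
    adjoint R (lp.single 2 i h) = (w i : ℂ) • lp.single 2 (f i) h := by
  refine ext_inner_right ℂ fun y => ?_
  rw [adjoint_inner_left, lp.inner_single_left, hR, inner_smul_left, lp.inner_single_left,
    inner_smul_right]
  simp

/-- A weighted shift along an injective map is compact if its weights tend to zero. -/
theorem isCompactOperator_adjoint_weightedPullback {f : ι → κ} (hf : Function.Injective f)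
    {w : ι → ℝ} (hw : Tendsto w cofinite (nhds 0))
    {R : lp (fun _ : κ => ℂ) 2 →L[ℂ] lp (fun _ : ι => ℂ) 2}
    (hR : ∀ x i, R x i = (w i : ℂ) • x (f i)) : IsCompactOperator (adjoint R) := by
  have hcl : IsClosed {A : lp (fun _ : ι => ℂ) 2 →L[ℂ] lp (fun _ : κ => ℂ) 2 |
      IsCompactOperator A} := isClosed_setOfPred_isCompactOperator
  refine hcl.closure_subset (Metric.mem_closure_iff.2 fun ε hε => ?_)
  have hfin : {i | ¬ |w i| < ε / 2}.Finite := by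
    have := (Metric.tendsto_nhds.1 hw) (ε / 2) (half_pos hε)
    simpa [Real.dist_0_eq_abs] using this
  obtain ⟨R', hR', hn⟩ := exists_weightedPullback (E := ℂ) hf
    (w := fun i => if |w i| < ε / 2 then w i else 0) (half_pos hε).le
    (fun i => by
      split_ifs with h
      · exact h.le
      · simpa using (half_pos hε).le)
  have hsum : R - R' = ∑ i ∈ hfin.toFinset, InnerProductSpace.rankOne ℂ
      (lp.single 2 i (1 : ℂ) : lp (fun _ : ι => ℂ) 2) ((w i : ℂ) • lp.single 2 (f i) (1 : ℂ)) := by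
    ext x j
    simp only [sub_apply, lp.coeFn_sub, Pi.sub_apply, hR, hR', sum_apply, lp.coeFn_sum,
      Finset.sum_apply, InnerProductSpace.rankOne_apply, lp.coeFn_smul, Pi.smul_apply,
      lp.single_apply, inner_smul_left, lp.inner_single_left]
    by_cases hj : |w j| < ε / 2
    · rw [Finset.sum_eq_zero]
      · simp [hj]
      · intro i hi
        have : j ≠ i := by
          rintro rfl
          simp at hi
          linarith
        simp [this]
    · rw [Finset.sum_eq_single_of_mem j (by simpa using hj)]
      · simp [hj]
      · intro i _ hij
        simp [hij.symm]
  refine ⟨adjoint (R - R'), ?_, ?_⟩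
  · rw [hsum, map_sum]
    refine (compactOperator (RingHom.id ℂ) (lp (fun _ : ι => ℂ) 2)
      (lp (fun _ : κ => ℂ) 2)).sum_mem fun i _ => ?_
    rw [InnerProductSpace.adjoint_rankOne, InnerProductSpace.rankOne_def']
    have hc : IsCompactOperator
        (toSpanSingleton ℂ ((w i : ℂ) • (lp.single 2 (f i) 1 : lp (fun _ : κ => ℂ) 2))) :=
      isCompactOperator_id.clm_comp _
    exact hc.comp_clm _
  · rw [dist_eq_norm, ← map_sub, sub_sub_cancel, LinearIsometryEquiv.norm_map]
    linarith

end WeightedPullback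

theorem wordOp_of_mul {n : ℕ} {H : Type*} [NormedAddCommGroup H] [InnerProductSpace ℂ H]
    (T : Fin n → H →L[ℂ] H) (i : Fin n) (α : Word n) :
    wordOp T (FreeMonoid.of i * α) = T i * wordOp T α := by
  simp [wordOp]

theorem adjoint_wordOp_of_mul {n : ℕ} {H : Type*} [NormedAddCommGroup H] [InnerProductSpace ℂ H]
    [CompleteSpace H] (T : Fin n → H →L[ℂ] H) (i : Fin n) (α : Word n) (x : H) :
    adjoint (wordOp T (FreeMonoid.of i * α)) x = adjoint (wordOp T α) (adjoint (T i) x) := by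
  rw [wordOp_of_mul, mul_def, adjoint_comp, comp_apply]

theorem length_wordOfFn {n k : ℕ} (f : Fin k → Fin n) : (wordOfFn f).length = k :=
  List.length_ofFn

theorem wordOfFn_mul_injective {n k : ℕ} :
    Function.Injective fun p : (Fin k → Fin n) × Word n => wordOfFn p.1 * p.2 := by
  rintro ⟨f, γ⟩ ⟨g, δ⟩ h
  obtain ⟨h1, h2⟩ := List.append_inj (show List.ofFn f ++ γ.toList = List.ofFn g ++ δ.toList from h)
    (by simp)
  exact Prod.ext (List.ofFn_injective h1) h2

theorem tendsto_length_cofinite {n : ℕ} :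
    Tendsto (FreeMonoid.length : Word n → ℕ) cofinite atTop := by
  rw [← Nat.cofinite_eq_atTop]
  exact Tendsto.cofinite_of_finite_preimage_singleton fun k => List.finite_length_eq (Fin n) k

section RadialShift

variable {n : ℕ} {m : ℕ → ℝ} {W : Fin n → Fock n →L[ℂ] Fock n}

theorem adjoint_wordOp_radialShift_apply
    (hW : ∀ i x γ, adjoint (W i) x γ = (m (γ.length + 1) : ℂ) • x (FreeMonoid.of i * γ))
    (α : Word n) (x : Fock n) (γ : Word n) :
    adjoint (wordOp W α) x γ =
      ((∏ j ∈ Finset.range α.length, m (γ.length + j + 1) : ℝ) : ℂ) • x (α * γ) := by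
  induction α using FreeMonoid.inductionOn' generalizing x with
  | one => simp [wordOp, ← star_eq_adjoint]
  | of_mul i α ih =>
    rw [adjoint_wordOp_of_mul, ih, hW, FreeMonoid.length_mul α γ, FreeMonoid.length_mul _ α,
      FreeMonoid.length_of, add_comm 1, Finset.prod_range_succ, add_comm α.length, smul_smul,
      mul_assoc]
    push_cast
    rfl

theorem norm_rowSum_radialShift_le (hanti : Antitone m) (hpos : ∀ k, 0 < m k)
    (hW : ∀ i x γ, adjoint (W i) x γ = (m (γ.length + 1) : ℂ) • x (FreeMonoid.of i * γ))
    (k : ℕ) : ‖rowSum W k‖ ≤ (∏ j ∈ Finset.range k, m (j + 1)) ^ 2 := by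
  set b := ∏ j ∈ Finset.range k, m (j + 1) with hb
  have hb0 : 0 ≤ b := Finset.prod_nonneg fun j _ => (hpos _).le
  refine norm_rowSum_le W k (sq_nonneg _) fun x => ?_
  have hterm : ∀ (f : Fin k → Fin n) (γ : Word n),
      ‖adjoint (wordOp W (wordOfFn f)) x γ‖ ^ 2 ≤ b ^ 2 * ‖x (wordOfFn f * γ)‖ ^ 2 := by
    intro f γ
    have h0 : 0 ≤ ∏ j ∈ Finset.range k, m (γ.length + j + 1) :=
      Finset.prod_nonneg fun j _ => (hpos _).le
    rw [adjoint_wordOp_radialShift_apply hW, norm_smul, mul_pow, length_wordOfFn,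
      Complex.norm_real, Real.norm_of_nonneg h0]
    gcongr
    exact Finset.prod_le_prod (fun j _ => (hpos _).le) fun j _ => hanti (by omega)
  have hs : ∀ y : Fock n, HasSum (fun γ => ‖y γ‖ ^ 2) (‖y‖ ^ 2) := fun y => by
    simpa using lp.hasSum_norm (p := 2) (by simp) y
  have hsum := hasSum_sum fun f (_ : f ∈ (Finset.univ : Finset (Fin k → Fin n))) =>
    hs (adjoint (wordOp W (wordOfFn f)) x)
  refine hasSum_le_of_sum_le hsum fun s => ?_
  calc ∑ γ ∈ s, ∑ f : Fin k → Fin n, ‖adjoint (wordOp W (wordOfFn f)) x γ‖ ^ 2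
      ≤ ∑ γ ∈ s, ∑ f : Fin k → Fin n, b ^ 2 * ‖x (wordOfFn f * γ)‖ ^ 2 :=
        Finset.sum_le_sum fun γ _ => Finset.sum_le_sum fun f _ => hterm f γ
    _ = b ^ 2 * ∑ p ∈ (Finset.univ : Finset (Fin k → Fin n)) ×ˢ s,
          ‖x (wordOfFn p.1 * p.2)‖ ^ 2 := by
        rw [Finset.sum_comm, Finset.mul_sum, Finset.sum_product]
    _ ≤ b ^ 2 * ‖x‖ ^ 2 := by
        gcongr
        exact sum_norm_sq_comp_le wordOfFn_mul_injective x _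

theorem tendsto_norm_rowSum_radialShift (hanti : Antitone m) (hpos : ∀ k, 0 < m k)
    (hm : Tendsto m atTop (nhds 0))
    (hW : ∀ i x γ, adjoint (W i) x γ = (m (γ.length + 1) : ℂ) • x (FreeMonoid.of i * γ)) :
    Tendsto (fun k : ℕ => ‖rowSum W k‖ ^ ((1 : ℝ) / (2 * k))) atTop (nhds 0) := by
  refine squeeze_zero (fun k => by positivity) (fun k => ?_)
    (tendsto_prod_rpow_inv_zero (fun k => (hpos (k + 1)).le) (hm.comp (tendsto_add_atTop_nat 1)))
  have hb0 : 0 ≤ ∏ j ∈ Finset.range k, m (j + 1) := Finset.prod_nonneg fun j _ => (hpos _).le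
  calc ‖rowSum W k‖ ^ ((1 : ℝ) / (2 * k))
      ≤ ((∏ j ∈ Finset.range k, m (j + 1)) ^ 2) ^ ((1 : ℝ) / (2 * k)) := by
        gcongr
        exact norm_rowSum_radialShift_le hanti hpos hW k
    _ = (∏ j ∈ Finset.range k, m (j + 1)) ^ ((k : ℝ)⁻¹) := by
        rw [← Real.rpow_natCast, ← Real.rpow_mul hb0]
        congr 1
        rw [one_div, mul_inv]
        push_cast
        ring

end RadialShift

/-- The rescaled family `α ↦ T_α^* h` defines a bounded operator into `ℓ²(𝔽ₙ⁺; H)` as soon as the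
row sums of `T` are dominated by the squared weights. -/
theorem exists_scaledOrbitMap {n : ℕ} {H : Type*} [NormedAddCommGroup H] [InnerProductSpace ℂ H]
    [CompleteSpace H] (T : Fin n → H →L[ℂ] H) {b u : ℕ → ℝ} (hu : Summable u)
    (h : ∀ k, (b k)⁻¹ ^ 2 * ‖rowSum T k‖ ≤ u k) :
    ∃ X : H →L[ℂ] lp (fun _ : Word n => H) 2, ∀ x α,
      X x α = (((b α.length)⁻¹ : ℝ) : ℂ) • adjoint (wordOp T α) x := by
  have hbound : ∀ (x : H) (s : Finset (Word n)),
      ∑ α ∈ s, ‖(((b α.length)⁻¹ : ℝ) : ℂ) • adjoint (wordOp T α) x‖ ^ 2 ≤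
        (√(∑' k, u k) * ‖x‖) ^ 2 := by
    intro x s
    have hu0 : 0 ≤ ∑' k, u k := tsum_nonneg fun k => le_trans (by positivity) (h k)
    rw [mul_pow, Real.sq_sqrt hu0, ← tsum_mul_right]
    refine sum_word_le (fun α => by positivity) (hu.mul_right _) (fun k => ?_) s
    calc ∑ f : Fin k → Fin n, ‖(((b (wordOfFn f).length)⁻¹ : ℝ) : ℂ) •
            adjoint (wordOp T (wordOfFn f)) x‖ ^ 2
        = (b k)⁻¹ ^ 2 * ∑ f : Fin k → Fin n, ‖adjoint (wordOp T (wordOfFn f)) x‖ ^ 2 := by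
          rw [Finset.mul_sum]
          refine Finset.sum_congr rfl fun f _ => ?_
          rw [norm_smul, mul_pow, length_wordOfFn, Complex.norm_real, Real.norm_eq_abs, sq_abs]
      _ ≤ (b k)⁻¹ ^ 2 * (‖rowSum T k‖ * ‖x‖ ^ 2) := by
          gcongr
          exact sum_norm_adjoint_wordOp_le T k x
      _ ≤ u k * ‖x‖ ^ 2 := by
          rw [← mul_assoc]
          gcongr
          exact h k
  let L : H →ₗ[ℂ] lp (fun _ : Word n => H) 2 :=
    { toFun := fun x => ⟨fun α => (((b α.length)⁻¹ : ℝ) : ℂ) • adjoint (wordOp T α) x,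
        memℓp_gen' (C := (√(∑' k, u k) * ‖x‖) ^ 2) fun s => by simpa using hbound x s⟩
      map_add' := fun x y => by
        ext α
        exact (congrArg _ (map_add _ x y)).trans (smul_add _ _ _)
      map_smul' := fun c x => by
        ext α
        exact (congrArg _ (map_smul _ c x)).trans (smul_comm _ _ _) }
  refine ⟨L.mkContinuous (√(∑' k, u k)) fun x => ?_, fun x α => rfl⟩
  refine lp.norm_le_of_forall_sum_le (by simp) (by positivity) fun s => ?_
  simpa [L] using hbound x s

theorem stmt_15 (n : ℕ) (hn : 1 ≤ n)
    {H : Type*} [NormedAddCommGroup H] [InnerProductSpace ℂ H] [CompleteSpace H]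
    (T : Fin n → H →L[ℂ] H)
    (hT : Tendsto (fun k : ℕ => ‖rowSum T k‖ ^ ((1 : ℝ) / (2 * k))) atTop (nhds 0)) :
    ∃ μ : Word n → ℝ,
      (∀ β : Word n, 1 ≤ FreeMonoid.length β → 0 ≤ μ β) ∧ BddWeights μ ∧
      ∃ W : Fin n → Fock n →L[ℂ] Fock n, IsWeightedShift μ W ∧
        Tendsto (fun k : ℕ => ‖rowSum W k‖ ^ ((1 : ℝ) / (2 * k))) atTop (nhds 0) ∧
        (∀ i : Fin n, IsCompactOperator ⇑(W i)) ∧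
        ∃ Wt : Fin n → lp (fun _ : Word n => H) 2 →L[ℂ] lp (fun _ : Word n => H) 2,
          IsWeightedShiftTensor μ Wt ∧
          ∃ (X : H →L[ℂ] lp (fun _ : Word n => H) 2) (c : ℝ), 0 < c ∧
            (∀ h : H, c * ‖h‖ ≤ ‖X h‖) ∧
            (∀ i : Fin n, ∀ y ∈ Set.range X, adjoint (Wt i) y ∈ Set.range X) ∧
            (∀ i : Fin n, X.comp (adjoint (T i)) = (adjoint (Wt i)).comp X) := by
  obtain ⟨m, hanti, hpos, hm, hbound⟩ :=
    exists_antitone_weights (fun k => ‖rowSum T k‖) (fun k => norm_nonneg _) hT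
  have hinj : ∀ i : Fin n, Function.Injective fun α : Word n => FreeMonoid.of i * α :=
    fun i => mul_right_injective _
  have hw : ∀ α : Word n, |m (α.length + 1)| ≤ m 0 := fun α => by
    rw [abs_of_pos (hpos _)]
    exact hanti (Nat.zero_le _)
  have hlen : ∀ (i : Fin n) (α : Word n), m (FreeMonoid.of i * α).length = m (α.length + 1) :=
    fun i α => by rw [FreeMonoid.length_mul, FreeMonoid.length_of, add_comm]
  choose R hR _ using fun i => exists_weightedPullback (E := ℂ) (hinj i) (hpos 0).le hw
  choose S hS _ using fun i => exists_weightedPullback (E := H) (hinj i) (hpos 0).le hw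
  have hW : ∀ i x γ, adjoint (adjoint (R i)) x γ =
      (m (γ.length + 1) : ℂ) • x (FreeMonoid.of i * γ) := fun i x γ => by
    rw [adjoint_adjoint, hR]
  have hm0 : Tendsto (fun α : Word n => m (α.length + 1)) cofinite (nhds 0) :=
    hm.comp ((tendsto_add_atTop_nat 1).comp tendsto_length_cofinite)
  set b : ℕ → ℝ := fun k => ∏ j ∈ Finset.range k, m (j + 1) with hb
  have hbpos : ∀ k, 0 < b k := fun k => Finset.prod_pos fun j _ => hpos _
  obtain ⟨X, hX⟩ := exists_scaledOrbitMap T (b := b) (u := fun k => (1 / 4 : ℝ) ^ k)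
    (summable_geometric_of_lt_one (by norm_num) (by norm_num)) fun k => by
      rw [inv_pow, inv_mul_le_iff₀ (pow_pos (hbpos k) 2), mul_comm]
      rcases Nat.eq_zero_or_pos k with rfl | hk
      · have h1 : ‖(1 : H →L[ℂ] H)‖ ≤ 1 := norm_id_le
        simpa [rowSum, wordOp, wordOfFn, hb] using h1
      · exact hbound k hk
  have hXS : ∀ i, X.comp (adjoint (T i)) = (adjoint (adjoint (S i))).comp X := fun i => by
    ext x α
    rw [adjoint_adjoint, comp_apply, comp_apply, hS, hX, hX, adjoint_wordOp_of_mul, smul_smul,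
      FreeMonoid.length_mul, FreeMonoid.length_of, add_comm 1]
    congr 1
    rw [← Complex.ofReal_mul, hb]
    dsimp only
    rw [Finset.prod_range_succ, mul_inv_rev, mul_inv_cancel_left₀ (hpos _).ne']
  refine ⟨fun β => m β.length, fun β _ => (hpos _).le, fun i => ⟨m 0, ?_⟩,
    fun i => adjoint (R i), fun i α => ?_,
    tendsto_norm_rowSum_radialShift hanti hpos hm hW,
    fun i => isCompactOperator_adjoint_weightedPullback (hinj i) hm0 (hR i),
    fun i => adjoint (S i), fun i α h => ?_, X, 1, one_pos, fun h => ?_, ?_, hXS⟩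
  · rintro _ ⟨α, rfl⟩
    exact hanti (Nat.zero_le _)
  · dsimp only
    rw [hlen]
    exact adjoint_weightedPullback_single (hR i) α 1
  · dsimp only
    rw [hlen]
    exact adjoint_weightedPullback_single (hS i) α h
  · have h1 : X h 1 = h := by simp [hX, hb, wordOp, ← star_eq_adjoint]
    calc 1 * ‖h‖ = ‖X h 1‖ := by rw [h1, one_mul]
      _ ≤ ‖X h‖ := lp.norm_apply_le_norm (by simp) _ _
  · rintro i _ ⟨x, rfl⟩
    exact ⟨adjoint (T i) x, DFunLike.congr_fun (hXS i) x⟩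

end
end

section
/- Let n ≥ 1, let H be a separable infinite-dimensional Hilbert space, and let T = (T₁,…,Tₙ) be a nonzero quasi-nilpotent n-tuple of bounded operators on H (r(T) = 0 and some T_i ≠ 0). Then there exist a Hilbert space L, a nonzero n-tuple K = (K₁,…,Kₙ) of compact operators on L, and a quasi-affinity Ω : L → H (a bounded, injective operator with dense range) such that Ω K_i = T_i Ω for every i ∈ {1,…,n}; that is, K is a quasi-affine transform of T. -/
open Filter ContinuousLinearMap
open scoped ComplexConjugate

noncomputable section

attribute [local instance] Classical.decEq

theorem isCompactOperator_rankOne {E F : Type*} [NormedAddCommGroup E] [NormedSpace ℂ E]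
    [NormedAddCommGroup F] [InnerProductSpace ℂ F] (x : E) (y : F) :
    IsCompactOperator (InnerProductSpace.rankOne ℂ x y) := by
  have h : IsCompactOperator (innerSL ℂ y : F →L[ℂ] ℂ) :=
    isCompactOperator_of_locallyCompactSpace_dom (innerSL ℂ y)
  exact h.clm_comp (ContinuousLinearMap.toSpanSingleton ℂ x)

theorem isCompactOperator_finsetSum {ι E F : Type*} [NormedAddCommGroup E] [NormedSpace ℂ E]
    [NormedAddCommGroup F] [NormedSpace ℂ F] {f : ι → E →L[ℂ] F}
    (hf : ∀ i, IsCompactOperator (f i)) (s : Finset ι) :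
    IsCompactOperator (∑ i ∈ s, f i : E →L[ℂ] F) := by
  induction s using Finset.induction_on with
  | empty => simpa using isCompactOperator_zero
  | insert a s ha ih =>
    rw [Finset.sum_insert ha]
    exact (hf a).add ih

theorem isCompactOperator_tsum {ι E F : Type*} [NormedAddCommGroup E] [NormedSpace ℂ E]
    [NormedAddCommGroup F] [NormedSpace ℂ F] [CompleteSpace F] {f : ι → E →L[ℂ] F}
    (hf : ∀ i, IsCompactOperator (f i)) (hs : Summable f) :
    IsCompactOperator (∑' i, f i : E →L[ℂ] F) :=
  isCompactOperator_of_tendsto hs.hasSum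
    (Eventually.of_forall (isCompactOperator_finsetSum hf))

/-- The norm of a finite sum of weighted rank-one operators built from two orthonormal families
is at most any common bound of the weights. -/
theorem norm_sum_smul_rankOne_le {ι E : Type*} [NormedAddCommGroup E] [InnerProductSpace ℂ E]
    {u v : ι → E} (hu : Orthonormal ℂ u) (hv : Orthonormal ℂ v) (c : ι → ℂ) (t : Finset ι)
    {δ : ℝ} (hδ : 0 ≤ δ) (hc : ∀ j ∈ t, ‖c j‖ ≤ δ) :
    ‖∑ j ∈ t, c j • InnerProductSpace.rankOne ℂ (u j) (v j)‖ ≤ δ := by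
  refine ContinuousLinearMap.opNorm_le_bound _ hδ fun x => ?_
  have hx : (∑ j ∈ t, c j • InnerProductSpace.rankOne ℂ (u j) (v j)) x
      = ∑ j ∈ t, (c j * inner ℂ (v j) x) • u j := by
    simp [smul_smul]
  have hsq : ‖∑ j ∈ t, (c j * inner ℂ (v j) x) • u j‖ ^ 2
      = ∑ j ∈ t, ‖c j‖ ^ 2 * ‖inner ℂ (v j) x‖ ^ 2 := by
    rw [← Complex.ofReal_inj, Complex.ofReal_pow]
    have h := inner_self_eq_norm_sq_to_K (𝕜 := ℂ) (∑ j ∈ t, (c j * inner ℂ (v j) x) • u j)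
    rw [hu.inner_sum] at h
    refine h.symm.trans ?_
    push_cast
    refine Finset.sum_congr rfl fun j _ => ?_
    rw [Complex.conj_mul', norm_mul]
    push_cast
    ring
  rw [hx]
  refine le_of_sq_le_sq ?_ (by positivity)
  rw [hsq, mul_pow]
  calc ∑ j ∈ t, ‖c j‖ ^ 2 * ‖inner ℂ (v j) x‖ ^ 2
      ≤ ∑ j ∈ t, δ ^ 2 * ‖inner ℂ (v j) x‖ ^ 2 := by
        refine Finset.sum_le_sum fun j hj => ?_
        have := hc j hj
        gcongr
    _ = δ ^ 2 * ∑ j ∈ t, ‖inner ℂ (v j) x‖ ^ 2 := by rw [Finset.mul_sum]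
    _ ≤ δ ^ 2 * ‖x‖ ^ 2 := by
        gcongr
        exact hv.sum_inner_products_le x

theorem summable_smul_rankOne {ι E : Type*} [NormedAddCommGroup E] [InnerProductSpace ℂ E]
    [CompleteSpace E] {u v : ι → E} (hu : Orthonormal ℂ u) (hv : Orthonormal ℂ v) {c : ι → ℂ}
    (hc : Tendsto c cofinite (nhds 0)) :
    Summable fun j => c j • InnerProductSpace.rankOne ℂ (u j) (v j) := by
  rw [summable_iff_vanishing_norm]
  intro ε hε
  have hfin : {j | ¬ ‖c j‖ < ε / 2}.Finite := by
    have := hc.norm.eventually (gt_mem_nhds (show ‖(0 : ℂ)‖ < ε / 2 by simpa using hε))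
    simpa [Filter.eventually_cofinite] using this
  refine ⟨hfin.toFinset, fun t ht => ?_⟩
  refine (norm_sum_smul_rankOne_le hu hv c t (half_pos hε).le fun j hj => ?_).trans_lt
    (half_lt_self hε)
  by_contra h
  exact Finset.disjoint_left.1 ht hj (by simpa using le_of_not_ge h)

/-- Tuples acting on a summable total family as compact weighted shifts have compact
quasi-affine transforms. -/
theorem exists_compact_quasiaffine_transform {ι κ : Type} {H : Type*} [NormedAddCommGroup H]
    [InnerProductSpace ℂ H] [CompleteSpace H] (T : κ → H →L[ℂ] H) (y : ι → H)
    (hy : Summable fun j => ‖y j‖) (hspan : Dense (Submodule.span ℂ (Set.range y) : Set H))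
    (σ : κ → ι → ι) (hσ : ∀ i, Function.Injective (σ i)) (c : ι → ℂ)
    (hc : Tendsto c cofinite (nhds 0)) (hT : ∀ i j, T i (y j) = c j • y (σ i j)) :
    ∃ (L : Type) (_ : NormedAddCommGroup L) (_ : InnerProductSpace ℂ L)
      (_ : CompleteSpace L) (K : κ → L →L[ℂ] L) (Ω : L →L[ℂ] H),
      (∀ i, IsCompactOperator ⇑(K i)) ∧ Function.Injective Ω ∧ DenseRange Ω ∧
      ∀ i, Ω.comp (K i) = (T i).comp Ω := by
  let b : HilbertBasis ι ℂ (lp (fun _ : ι => ℂ) 2) := default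
  have hb : Orthonormal ℂ b := b.orthonormal
  have hΦs : Summable fun j => InnerProductSpace.rankOne ℂ (y j) (b j) := by
    refine Summable.of_norm ?_
    simpa [InnerProductSpace.norm_rankOne, hb.norm_eq_one] using hy
  set Φ : lp (fun _ : ι => ℂ) 2 →L[ℂ] H := ∑' j, InnerProductSpace.rankOne ℂ (y j) (b j) with hΦ
  have hΦb : ∀ j, Φ (b j) = y j := by
    intro j
    have h := hΦs.hasSum.mapL (ContinuousLinearMap.apply ℂ H (b j))
    refine h.unique ?_
    have h1 := hasSum_single (f := fun k => (ContinuousLinearMap.apply ℂ H (b j))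
      (InnerProductSpace.rankOne ℂ (y k) (b k))) j (fun k hk => by
        simp [hb.inner_eq_zero hk])
    simpa [hb.norm_eq_one] using h1
  have hSs : ∀ i, Summable fun j => c j • InnerProductSpace.rankOne ℂ (b (σ i j)) (b j) :=
    fun i => summable_smul_rankOne (hb.comp _ (hσ i)) hb hc
  set S : κ → lp (fun _ : ι => ℂ) 2 →L[ℂ] lp (fun _ : ι => ℂ) 2 :=
    fun i => ∑' j, c j • InnerProductSpace.rankOne ℂ (b (σ i j)) (b j) with hS
  have hScomp : ∀ i, IsCompactOperator (S i) := fun i =>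
    isCompactOperator_tsum (fun j => (isCompactOperator_rankOne _ _).smul (c j)) (hSs i)
  have hinter : ∀ i, Φ.comp (S i) = (T i).comp Φ := by
    intro i
    have h1 := (hSs i).hasSum.mapL (ContinuousLinearMap.compL ℂ (lp (fun _ : ι => ℂ) 2)
      (lp (fun _ : ι => ℂ) 2) H Φ)
    have h2 := hΦs.hasSum.mapL (ContinuousLinearMap.compL ℂ (lp (fun _ : ι => ℂ) 2) H H (T i))
    refine h1.unique (h2.congr_fun fun j => ?_)
    ext x
    simp [hΦb, hT, smul_smul, mul_comm]
  set N : Submodule ℂ (lp (fun _ : ι => ℂ) 2) := LinearMap.ker Φ.toLinearMap with hN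
  have hNc : IsClosed (N : Set (lp (fun _ : ι => ℂ) 2)) := Φ.isClosed_ker
  have : CompleteSpace N := hNc.completeSpace_coe
  have hproj : ∀ z, Φ (Nᗮ.orthogonalProjectionOnto z) = Φ z := by
    intro z
    have h := Nᗮ.sub_starProjection_mem_orthogonal z
    rw [Submodule.orthogonal_orthogonal] at h
    have h' : Φ (z - Nᗮ.starProjection z) = 0 := h
    rw [map_sub, sub_eq_zero] at h'
    exact h'.symm
  refine ⟨Nᗮ, inferInstance, inferInstance, inferInstance,
    fun i => Nᗮ.orthogonalProjectionOnto ∘L S i ∘L Nᗮ.subtypeL, Φ ∘L Nᗮ.subtypeL,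
    fun i => ?_, ?_, ?_, fun i => ?_⟩
  · exact ((hScomp i).comp_clm Nᗮ.subtypeL).clm_comp Nᗮ.orthogonalProjectionOnto
  · rw [injective_iff_map_eq_zero]
    intro z hz
    have h1 : (z : lp (fun _ : ι => ℂ) 2) ∈ N := hz
    have h2 := Submodule.inner_right_of_mem_orthogonal h1 z.2
    exact Subtype.ext (inner_self_eq_zero.1 h2)
  · refine hspan.mono ?_
    have hle : Submodule.span ℂ (Set.range y) ≤
        LinearMap.range (Φ ∘L Nᗮ.subtypeL).toLinearMap := by
      rw [Submodule.span_le]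
      rintro _ ⟨j, rfl⟩
      exact ⟨Nᗮ.orthogonalProjectionOnto (b j), (hproj _).trans (hΦb j)⟩
    exact hle
  · ext x
    have h := congrArg (fun A => A (x : lp (fun _ : ι => ℂ) 2)) (hinter i)
    exact (hproj _).trans h

theorem wordOp_wordOfFn_cons {n m : ℕ} {H : Type*} [NormedAddCommGroup H]
    [InnerProductSpace ℂ H] (T : Fin n → H →L[ℂ] H) (i : Fin n) (f : Fin m → Fin n) :
    wordOp T (wordOfFn (Fin.cons i f : Fin (m + 1) → Fin n)) = T i * wordOp T (wordOfFn f) := by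
  simp [wordOp, wordOfFn, List.ofFn_succ]

theorem sq_norm_wordOp_le {n m : ℕ} {H : Type*} [NormedAddCommGroup H] [InnerProductSpace ℂ H]
    [CompleteSpace H] (T : Fin n → H →L[ℂ] H) (f : Fin m → Fin n) :
    ‖wordOp T (wordOfFn f)‖ ^ 2 ≤ ‖rowSum T m‖ := by
  rw [← LinearIsometryEquiv.norm_map adjoint (wordOp T (wordOfFn f))]
  suffices h : ‖adjoint (wordOp T (wordOfFn f))‖ ≤ √‖rowSum T m‖ from
    (pow_le_pow_left₀ (norm_nonneg _) h 2).trans_eq (Real.sq_sqrt (norm_nonneg _))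
  refine ContinuousLinearMap.opNorm_le_bound _ (Real.sqrt_nonneg _) fun x => ?_
  refine le_of_sq_le_sq ?_ (by positivity)
  rw [mul_pow, Real.sq_sqrt (norm_nonneg _)]
  have hsum : RCLike.re (inner ℂ (rowSum T m x) x)
      = ∑ g : Fin m → Fin n, ‖adjoint (wordOp T (wordOfFn g)) x‖ ^ 2 := by
    simp only [rowSum, sum_apply, sum_inner, map_sum, mul_apply_eq_comp]
    refine Finset.sum_congr rfl fun g _ => ?_
    rw [← ContinuousLinearMap.adjoint_inner_right, inner_self_eq_norm_sq]
  calc ‖adjoint (wordOp T (wordOfFn f)) x‖ ^ 2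
      ≤ ∑ g : Fin m → Fin n, ‖adjoint (wordOp T (wordOfFn g)) x‖ ^ 2 :=
        Finset.single_le_sum (f := fun g : Fin m → Fin n =>
          ‖adjoint (wordOp T (wordOfFn g)) x‖ ^ 2) (fun g _ => by positivity) (Finset.mem_univ f)
    _ = RCLike.re (inner ℂ (rowSum T m x) x) := hsum.symm
    _ ≤ ‖rowSum T m x‖ * ‖x‖ := re_inner_le_norm _ _
    _ ≤ ‖rowSum T m‖ * ‖x‖ * ‖x‖ := by gcongr; exact le_opNorm _ _
    _ = ‖rowSum T m‖ * ‖x‖ ^ 2 := by ring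

theorem exists_antitone_majorant {a : ℕ → ℝ} (ha : ∀ m, 0 ≤ a m)
    (hlim : Tendsto a atTop (nhds 0)) :
    ∃ γ : ℕ → ℝ, Antitone γ ∧ (∀ m, 0 < γ m) ∧ (∀ m, a m ≤ γ m) ∧
      Tendsto γ atTop (nhds 0) := by
  have hbdd : ∀ m, BddAbove (Set.range fun j => a (m + j)) := fun m =>
    hlim.bddAbove_range.mono (Set.range_subset_iff.2 fun j => Set.mem_range_self _)
  have hle : ∀ m j, a (m + j) ≤ ⨆ j, a (m + j) := fun m j => le_ciSup (hbdd m) j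
  have hanti : Antitone fun m => ⨆ j, a (m + j) := by
    intro m m' hmm'
    refine ciSup_le fun j => ?_
    obtain ⟨d, rfl⟩ := Nat.exists_eq_add_of_le hmm'
    simpa [add_assoc] using hle m (d + j)
  have hsup : Tendsto (fun m => ⨆ j, a (m + j)) atTop (nhds 0) := by
    refine tendsto_order.2 ⟨fun ε hε => Eventually.of_forall fun m =>
      hε.trans_le ((ha m).trans (hle m 0)), fun ε hε => ?_⟩
    obtain ⟨M, hM⟩ := eventually_atTop.1 (hlim.eventually (gt_mem_nhds (half_pos hε)))
    filter_upwards [eventually_ge_atTop M] with m hm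
    exact (ciSup_le fun j => (hM _ (by omega)).le).trans_lt (half_lt_self hε)
  refine ⟨fun m => (⨆ j, a (m + j)) + 1 / ((m : ℝ) + 1), ?_, ?_, ?_, ?_⟩
  · exact hanti.add fun m m' h => Nat.one_div_le_one_div h
  · intro m
    have h1 := (ha m).trans (hle m 0)
    have h2 : 0 < 1 / ((m : ℝ) + 1) := Nat.one_div_pos_of_nat
    linarith
  · intro m
    have h1 := hle m 0
    have h2 : 0 < 1 / ((m : ℝ) + 1) := Nat.one_div_pos_of_nat
    rw [add_zero] at h1
    linarith
  · simpa using hsup.add tendsto_one_div_add_atTop_nhds_zero_nat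

theorem exists_antitone_norm_wordOp_le {n : ℕ} {H : Type*} [NormedAddCommGroup H]
    [InnerProductSpace ℂ H] [CompleteSpace H] (T : Fin n → H →L[ℂ] H)
    (hq : Tendsto (fun k : ℕ => ‖rowSum T k‖ ^ ((1 : ℝ) / (2 * k))) atTop (nhds 0)) :
    ∃ γ : ℕ → ℝ, Antitone γ ∧ (∀ m, 0 < γ m) ∧ Tendsto γ atTop (nhds 0) ∧
      ∀ (m : ℕ) (f : Fin m → Fin n), ‖wordOp T (wordOfFn f)‖ ≤ (γ m ^ 2) ^ m := by
  have hq' := hq.sqrt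
  rw [Real.sqrt_zero] at hq'
  obtain ⟨γ, hanti, hpos, hle, hlim⟩ :=
    exists_antitone_majorant (fun m => Real.sqrt_nonneg _) hq'
  refine ⟨γ, hanti, hpos, hlim, fun m f => ?_⟩
  rcases Nat.eq_zero_or_pos m with rfl | hm
  · have : wordOp T (wordOfFn f) = ContinuousLinearMap.id ℂ H := by
      simp [wordOp, wordOfFn, ContinuousLinearMap.one_def]
    rw [this, pow_zero]
    exact norm_id_le
  · have h1 : ‖rowSum T m‖ ^ ((1 : ℝ) / (2 * m)) ≤ γ m ^ 2 :=
      (Real.sqrt_le_left (hpos m).le).1 (hle m)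
    have h2 : (‖rowSum T m‖ ^ ((1 : ℝ) / (2 * m))) ^ m = √‖rowSum T m‖ := by
      have hm' : (m : ℝ) ≠ 0 := by positivity
      rw [← Real.rpow_natCast, ← Real.rpow_mul (norm_nonneg _), Real.sqrt_eq_rpow]
      congr 1
      field_simp
    calc ‖wordOp T (wordOfFn f)‖ ≤ √‖rowSum T m‖ := Real.le_sqrt_of_sq_le (sq_norm_wordOp_le T f)
      _ = _ := h2.symm
      _ ≤ _ := pow_le_pow_left₀ (by positivity) h1 m

theorem summable_pow_of_tendsto_zero {γ : ℕ → ℝ} (hlim : Tendsto γ atTop (nhds 0)) :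
    Summable fun m => γ m ^ m := by
  refine Summable.of_norm_bounded_eventually_nat summable_geometric_two ?_
  have := hlim.norm.eventually (gt_mem_nhds (show ‖(0 : ℝ)‖ < 1 / 2 by simp))
  filter_upwards [this] with m hm
  rw [norm_pow]
  exact pow_le_pow_left₀ (norm_nonneg _) hm.le m

theorem summable_sigma_fin_pow {γ : ℕ → ℝ} (hpos : ∀ m, 0 < γ m)
    (hlim : Tendsto γ atTop (nhds 0)) (n : ℕ) {r : ℝ} (hr : 0 ≤ r) :
    Summable fun s : Σ m, Fin m → Fin n => (r * γ s.1) ^ s.1 := by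
  rw [summable_sigma_of_nonneg fun s => pow_nonneg (mul_nonneg hr (hpos _).le) _]
  refine ⟨fun m => Summable.of_finite, ?_⟩
  have h := summable_pow_of_tendsto_zero (γ := fun m => n * (r * γ m))
    (by simpa using (hlim.const_mul r).const_mul (n : ℝ))
  simpa [tsum_fintype, mul_pow] using h

theorem summable_prod_mul {β : Type*} {w : ℕ → ℝ} (hw : ∀ k, 0 ≤ w k) {p : ℕ → β → ℝ}
    (hp : ∀ k s, 0 ≤ p k s) (hs : ∀ k, Summable (p k))
    (h : Summable fun k => w k * ∑' s, p k s) :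
    Summable fun q : ℕ × β => w q.1 * p q.1 q.2 := by
  have hnn : (0 : ℕ × β → ℝ) ≤ fun q => w q.1 * p q.1 q.2 :=
    fun q => mul_nonneg (hw q.1) (hp q.1 q.2)
  have h₁ : ∀ k, Summable fun s => w k * p k s := fun k => (hs k).mul_left (w k)
  have h₂ : Summable fun k => ∑' s, w k * p k s := h.congr fun k => tsum_mul_left.symm
  exact (summable_prod_of_nonneg hnn).2 ⟨h₁, h₂⟩

theorem summable_prod_normalized {β : Type*} {g : ℕ → ℝ} (hg : ∀ k, 0 ≤ g k)
    (hgs : Summable g) {p : ℕ → β → ℝ} (hp : ∀ k s, 0 ≤ p k s) (hs : ∀ k, Summable (p k)) :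
    Summable fun q : ℕ × β => g q.1 / (1 + ∑' s, p q.1 s) * p q.1 q.2 := by
  have h0 : ∀ k, 0 ≤ ∑' s, p k s := fun k => tsum_nonneg (hp k)
  have hw : ∀ k, 0 ≤ g k / (1 + ∑' s, p k s) := fun k =>
    div_nonneg (hg k) (add_nonneg zero_le_one (h0 k))
  refine summable_prod_mul hw hp hs (Summable.of_nonneg_of_le
    (fun k => mul_nonneg (hw k) (h0 k)) (fun k => ?_) hgs)
  have h1 : (0 : ℝ) < 1 + ∑' s, p k s := add_pos_of_pos_of_nonneg one_pos (h0 k)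
  rw [div_mul_eq_mul_div, div_le_iff₀ h1]
  exact mul_le_mul_of_nonneg_left (le_add_of_nonneg_left zero_le_one) (hg k)

theorem tendsto_cofinite_shift_weight {γ : ℕ → ℝ} (hanti : Antitone γ) (hpos : ∀ m, 0 < γ m)
    (hlim : Tendsto γ atTop (nhds 0)) (n : ℕ) :
    Tendsto (fun q : ℕ × (Σ m, Fin m → Fin n) => γ q.2.1 / ((q.1 : ℝ) + 1)) cofinite
      (nhds 0) := by
  refine tendsto_order.2 ⟨fun ε hε => Eventually.of_forall fun q =>
    hε.trans (div_pos (hpos _) (by positivity)), fun ε hε => ?_⟩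
  obtain ⟨M, hM⟩ := eventually_atTop.1 (hlim.eventually (gt_mem_nhds hε))
  obtain ⟨N, hN⟩ := exists_nat_gt (γ 0 / ε)
  refine ((Finset.range N ×ˢ (Finset.range M).sigma
    fun m => (Finset.univ : Finset (Fin m → Fin n))).finite_toSet).subset ?_
  rintro ⟨k, m, f⟩ hq
  have hq' : ε ≤ γ m / ((k : ℝ) + 1) := not_lt.1 hq
  have hk : (0 : ℝ) < (k : ℝ) + 1 := by positivity
  rw [le_div_iff₀ hk] at hq'
  have hγ := hanti (Nat.zero_le m)
  rw [div_lt_iff₀ hε] at hN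
  have h1 : k < N := by
    have : (k : ℝ) < N := by nlinarith
    exact_mod_cast this
  have h2 : m < M := by
    by_contra h
    have := hM m (not_lt.1 h)
    have hk0 : (0 : ℝ) ≤ k := k.cast_nonneg
    nlinarith
  simp [h1, h2]

theorem stmt_17 (n : ℕ) (hn : 1 ≤ n)
    {H : Type} [NormedAddCommGroup H] [InnerProductSpace ℂ H] [CompleteSpace H]
    [TopologicalSpace.SeparableSpace H] (hinf : ¬ FiniteDimensional ℂ H)
    (T : Fin n → H →L[ℂ] H)
    (hq : Tendsto (fun k : ℕ => ‖rowSum T k‖ ^ ((1 : ℝ) / (2 * k))) atTop (nhds 0))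
    (hnz : ∃ i, T i ≠ 0) :
    ∃ (L : Type) (_ : NormedAddCommGroup L) (_ : InnerProductSpace ℂ L)
      (_ : CompleteSpace L) (K : Fin n → L →L[ℂ] L) (Ω : L →L[ℂ] H),
      (∃ i, K i ≠ 0) ∧ (∀ i, IsCompactOperator ⇑(K i)) ∧
      Function.Injective Ω ∧ DenseRange Ω ∧
      ∀ i, Ω.comp (K i) = (T i).comp Ω := by
  obtain ⟨γ, hanti, hpos, hlim, hγ⟩ := exists_antitone_norm_wordOp_le T hq
  set x : ℕ → H := TopologicalSpace.denseSeq H with hx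
  set p : ℕ → (Σ m, Fin m → Fin n) → ℝ :=
    fun k s => ‖x k‖ * (((k : ℝ) + 1) * γ s.1) ^ s.1 with hp
  have hp0 : ∀ k s, 0 ≤ p k s := fun k s => by
    have := hpos s.1
    positivity
  have hps : ∀ k, Summable (p k) := fun k =>
    (summable_sigma_fin_pow hpos hlim n (by positivity)).mul_left _
  set w : ℕ → ℝ := fun k => (1 / 2 : ℝ) ^ k / (1 + ∑' s, p k s) with hw
  have hw0 : ∀ k, 0 < w k := fun k => by
    have : 0 ≤ ∑' s, p k s := tsum_nonneg (hp0 k)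
    positivity
  have hP : ∀ m, 0 < ∏ j ∈ Finset.range m, γ j := fun m => Finset.prod_pos fun j _ => hpos j
  have hPle : ∀ m, γ m ^ m ≤ ∏ j ∈ Finset.range m, γ j := fun m => by
    have := Finset.prod_le_prod (s := Finset.range m) (f := fun _ => γ m) (g := γ)
      (fun _ _ => (hpos m).le) fun j hj => hanti (Finset.mem_range.1 hj).le
    simpa using this
  set y : ℕ × (Σ m, Fin m → Fin n) → H := fun q =>
    ((w q.1 * ((q.1 : ℝ) + 1) ^ q.2.1 / ∏ j ∈ Finset.range q.2.1, γ j : ℝ) : ℂ) •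
      wordOp T (wordOfFn q.2.2) (x q.1) with hy
  have hys : Summable fun q => ‖y q‖ := by
    refine Summable.of_nonneg_of_le (fun q => norm_nonneg _) (fun q => ?_)
      (summable_prod_normalized (g := fun k => (1 / 2 : ℝ) ^ k) (fun k => by positivity)
        summable_geometric_two hp0 hps)
    obtain ⟨k, m, f⟩ := q
    have hwk := hw0 k
    have hPm := hP m
    have hγm := hpos m
    have hcoef : 0 < w k * ((k : ℝ) + 1) ^ m / ∏ j ∈ Finset.range m, γ j := by positivity
    change ‖((w k * ((k : ℝ) + 1) ^ m / ∏ j ∈ Finset.range m, γ j : ℝ) : ℂ) •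
      wordOp T (wordOfFn f) (x k)‖ ≤ w k * (‖x k‖ * (((k : ℝ) + 1) * γ m) ^ m)
    rw [norm_smul, Complex.norm_real, Real.norm_of_nonneg hcoef.le]
    calc w k * ((k : ℝ) + 1) ^ m / (∏ j ∈ Finset.range m, γ j) * ‖wordOp T (wordOfFn f) (x k)‖
        ≤ w k * ((k : ℝ) + 1) ^ m / γ m ^ m * ((γ m ^ 2) ^ m * ‖x k‖) := by
          gcongr
          · exact hPle m
          · exact (le_opNorm _ _).trans (by gcongr; exact hγ m f)
      _ = w k * (‖x k‖ * (((k : ℝ) + 1) * γ m) ^ m) := by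
          rw [mul_pow, pow_right_comm]
          field_simp
  have hspan : Dense (Submodule.span ℂ (Set.range y) : Set H) := by
    refine (TopologicalSpace.denseRange_denseSeq H).mono ?_
    rintro _ ⟨k, rfl⟩
    have hmem : y (k, ⟨0, Fin.elim0⟩) ∈ Submodule.span ℂ (Set.range y) :=
      Submodule.subset_span ⟨_, rfl⟩
    have hyk : y (k, ⟨0, Fin.elim0⟩) = (w k : ℂ) • x k := by
      simp [hy, wordOp, wordOfFn]
    rw [hyk] at hmem
    exact (Submodule.smul_mem_iff _ (by exact_mod_cast (hw0 k).ne')).1 hmem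
  obtain ⟨L, iL₁, iL₂, iL₃, K, Ω, hK, hinj, hdense, hinter⟩ :=
    exists_compact_quasiaffine_transform T y hys hspan
      (fun i q => (q.1, ⟨q.2.1 + 1, Fin.cons i q.2.2⟩))
      (fun i => by
        rintro ⟨k, m, f⟩ ⟨k', m', f'⟩ h
        simp only [Prod.mk.injEq, Sigma.mk.injEq, Nat.add_right_cancel_iff] at h
        obtain ⟨rfl, rfl, h⟩ := h
        have h' : f = f' := Fin.cons_right_injective (α := fun _ => Fin n) i (eq_of_heq h)
        rw [h'])
      (fun q => ((γ q.2.1 / ((q.1 : ℝ) + 1) : ℝ) : ℂ))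
      (by
        have := (Complex.continuous_ofReal.tendsto 0).comp
          (tendsto_cofinite_shift_weight hanti hpos hlim n)
        rwa [Complex.ofReal_zero] at this)
      (by
        rintro i ⟨k, m, f⟩
        simp only [hy, map_smul, wordOp_wordOfFn_cons, mul_apply_eq_comp, smul_smul,
          ← Complex.ofReal_mul, Finset.prod_range_succ]
        congr 2
        have hPm := (hP m).ne'
        have hγm := (hpos m).ne'
        have hk : (k : ℝ) + 1 ≠ 0 := by positivity
        field_simp
        ring)
  refine ⟨L, iL₁, iL₂, iL₃, K, Ω, ?_, hK, hinj, hdense, hinter⟩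
  obtain ⟨i, hi⟩ := hnz
  refine ⟨i, fun hKi => hi ?_⟩
  have h := hinter i
  rw [hKi, comp_zero] at h
  refine ContinuousLinearMap.coeFn_injective
    (hdense.equalizer (T i).continuous continuous_zero ?_)
  funext z
  exact (congrArg (fun A => A z) h).symm

end
end
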